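/- arXiv:1603.03117 — 2 statements merged into one kernel-verified Lean document; each statement's English description precedes it below -/
import Mathlib

section
/- Assume f(0) = 0 and f'_y(0) ≠ 0. Then for any m > 0 there exists δ > 0 such that for all (x,y) with |x| ≤ m|y|³ and 0 < |y| ≤ δ, the equation X(t,x,y) = −x admits a unique solution t = T̃(x,y) in the range |t| ≤ (4m/|f'_y(0)|)·y². Moreover, the function T̃ is C² on the region {(x,y) : ∛(|x|/m) < |y| < δ}. -/
open Set Filter Topology

/-- Partial derivative in the second variable. -/
noncomputable def pdy (f : ℝ → ℝ → ℝ) (a b : ℝ) : ℝ := deriv (fun y => f a y) b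

/-- Real cube root (for nonnegative arguments). -/
noncomputable def cbrt (s : ℝ) : ℝ := s ^ ((1 : ℝ) / 3)

/-- A function whose derivative stays bounded away from zero with a fixed sign on `[-r, r]`, and
which is small enough at `0`, has exactly one zero in `[-r, r]`, lying in the interior. -/
theorem exists_unique_zero_of_le_mul_deriv {h h' : ℝ → ℝ} {a C r : ℝ} (hC : 0 < C)
    (hd : ∀ t, |t| ≤ r → HasDerivAt h (h' t) t) (hle : ∀ t, |t| ≤ r → C ≤ a * h' t)
    (h0 : |a * h 0| < C * r) :
    ∃ t, |t| < r ∧ h t = 0 ∧ ∀ s, |s| ≤ r → h s = 0 → s = t := by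
  have hr : 0 < r := pos_of_mul_pos_right ((abs_nonneg _).trans_lt h0) hC.le
  have ha : a ≠ 0 := by
    rintro rfl
    have := hle 0 (by simpa using hr.le)
    linarith
  have hder : ∀ t ∈ Icc (-r) r, HasDerivAt (fun s => a * h s) (a * h' t) t := fun t ht =>
    (hd t (abs_le.2 ht)).const_mul a
  have hcont : ContinuousOn (fun s => a * h s) (Icc (-r) r) := fun t ht =>
    (hder t ht).continuousAt.continuousWithinAt
  have hgrow := (convex_Icc (-r) r).mul_sub_le_image_sub_of_le_deriv hcont
    (fun t ht => (hder t (interior_subset ht)).differentiableAt.differentiableWithinAt)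
    (C := C) (fun t ht => by
      rw [(hder t (interior_subset ht)).deriv]
      have htmem : t ∈ Icc (-r) r := interior_subset ht
      exact hle t (abs_le.2 htmem))
  have hright := hgrow 0 ⟨by linarith, hr.le⟩ r ⟨by linarith, le_rfl⟩ hr.le
  have hleft := hgrow (-r) ⟨le_rfl, by linarith⟩ 0 ⟨by linarith, hr.le⟩ (by linarith)
  obtain ⟨hlo, hhi⟩ := abs_lt.1 h0
  obtain ⟨t, ht, hzero⟩ := intermediate_value_Ioo (by linarith : -r ≤ r) hcont
    (show (0 : ℝ) ∈ Ioo (a * h (-r)) (a * h r) from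
      ⟨by linarith, by linarith⟩)
  have hzero' : h t = 0 := by simpa [ha] using hzero
  refine ⟨t, abs_lt.2 ht, hzero', fun s hs hs0 => ?_⟩
  have hs' := abs_le.1 hs
  rcases le_total s t with hst | hst
  · have := hgrow s hs' t (Ioo_subset_Icc_self ht) hst
    simp only [hs0, hzero', mul_zero, sub_self] at this
    nlinarith
  · have := hgrow t (Ioo_subset_Icc_self ht) s hs' hst
    simp only [hs0, hzero', mul_zero, sub_self] at this
    nlinarith

/-- Implicit function theorem for one scalar unknown. -/
theorem ContDiffAt.exists_implicit_of_hasDerivAt {E : Type*} [NormedAddCommGroup E]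
    [NormedSpace ℝ E] [CompleteSpace E] {G : E × ℝ → ℝ} {p : E} {t d : ℝ} {n : WithTop ℕ∞}
    (hG : ContDiffAt ℝ n G (p, t)) (hn : n ≠ 0) (hd : HasDerivAt (fun s => G (p, s)) d t)
    (hd0 : d ≠ 0) :
    ∃ ψ : E → ℝ, ContDiffAt ℝ n ψ p ∧ ψ p = t ∧ ∀ᶠ q in 𝓝 p, G (q, ψ q) = G (p, t) := by
  have hcomp : HasDerivAt (fun s => G (p, s)) (fderiv ℝ G (p, t) (0, 1)) t :=
    (hG.differentiableAt hn).hasFDerivAt.comp_hasDerivAt t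
      ((hasDerivAt_const t p).prodMk (hasDerivAt_id t))
  have hval : fderiv ℝ G (p, t) (0, 1) = d := hcomp.unique hd
  have hinv : (fderiv ℝ G (p, t) ∘L .inr ℝ E ℝ).IsInvertible := by
    refine ⟨ContinuousLinearEquiv.unitsEquivAut ℝ (Units.mk0 d hd0), ?_⟩
    ext
    simp [hval]
  exact ⟨hG.implicitFunction hn hinv, hG.contDiffAt_implicitFunction hn hinv,
    hG.implicitFunction_apply_self hn hinv, hG.eventually_apply_implicitFunction hn hinv⟩

/-- Cusps `|t| ≤ K y²`, `|x| ≤ m |y|³` are tangent to the `y`-axis and, for small `y`, lie in any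
prescribed neighbourhood of the origin. -/
theorem exists_forall_cusp_mem {S : Set (ℝ × ℝ × ℝ)} (hS : S ∈ 𝓝 (0 : ℝ × ℝ × ℝ)) {K m η : ℝ}
    (hK : 0 ≤ K) (hm : 0 ≤ m) (hη : 0 < η) :
    ∃ δ > (0 : ℝ), ∀ t x y : ℝ, |y| ≤ δ → |t| ≤ K * y ^ 2 → |x| ≤ m * |y| ^ 3 →
      (t, x, y) ∈ S ∧ |t| ≤ η * |y| ∧ |x| ≤ η * |y| := by
  obtain ⟨ρ, hρ, hball⟩ := Metric.mem_nhds_iff.1 hS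
  set θ := min η 1
  have hθ : 0 < θ := lt_min hη one_pos
  refine ⟨min (min 1 (ρ / 2)) (min (θ / (K + 1)) (θ / (m + 1))), by positivity,
    fun t x y hy ht hx => ?_⟩
  simp only [le_min_iff] at hy
  obtain ⟨⟨hy1, hyρ⟩, hyK, hym⟩ := hy
  rw [le_div_iff₀ (by positivity)] at hyK hym
  have hy0 := abs_nonneg y
  have ht' : |t| ≤ θ * |y| := by
    rw [← sq_abs] at ht
    nlinarith
  have hx' : |x| ≤ θ * |y| := by
    have h3 : |y| ^ 3 ≤ |y| * |y| := by nlinarith [mul_nonneg hy0 hy0]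
    nlinarith [mul_le_mul_of_nonneg_left h3 hm]
  have hθ1 : θ * |y| ≤ |y| := mul_le_of_le_one_left hy0 (min_le_right _ _)
  have hθη : θ * |y| ≤ η * |y| := mul_le_mul_of_nonneg_right (min_le_left _ _) hy0
  refine ⟨hball ?_, ht'.trans hθη, hx'.trans hθη⟩
  simp only [mem_ball_zero_iff, Prod.norm_def, Real.norm_eq_abs, max_lt_iff]
  exact ⟨by linarith, by linarith, by linarith⟩

/-- First-order expansion of a function vanishing at the origin along the cusps
`|t| ≤ K y²`, `|x| ≤ m |y|³`: only the `y`-derivative contributes. -/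
theorem HasFDerivAt.exists_forall_cusp_abs_sub_le {Φ : ℝ × ℝ × ℝ → ℝ}
    {L : ℝ × ℝ × ℝ →L[ℝ] ℝ} (hΦ : HasFDerivAt Φ L 0) (hΦ0 : Φ 0 = 0)
    {S : Set (ℝ × ℝ × ℝ)} (hS : S ∈ 𝓝 (0 : ℝ × ℝ × ℝ)) {K m ε : ℝ}
    (hK : 0 ≤ K) (hm : 0 ≤ m) (hε : 0 < ε) :
    ∃ δ > (0 : ℝ), ∀ t x y : ℝ, |y| ≤ δ → |t| ≤ K * y ^ 2 → |x| ≤ m * |y| ^ 3 →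
      (t, x, y) ∈ S ∧ |Φ (t, x, y) - L (0, 0, 1) * y| ≤ ε * |y| := by
  have hsmall := hΦ.isLittleO.def (half_pos hε)
  simp only [hΦ0, sub_zero] at hsmall
  obtain ⟨δ, hδ, hcusp⟩ := exists_forall_cusp_mem (inter_mem hS hsmall) hK hm
    (lt_min one_pos (by positivity : 0 < ε / 2 / (‖L‖ + 1)))
  refine ⟨δ, hδ, fun t x y hy ht hx => ?_⟩
  obtain ⟨⟨hmem, happrox⟩, ht', hx'⟩ := hcusp t x y hy ht hx
  refine ⟨hmem, ?_⟩
  set η := min 1 (ε / 2 / (‖L‖ + 1))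
  have hy0 := abs_nonneg y
  have hη1 : η * |y| ≤ |y| := mul_le_of_le_one_left hy0 (min_le_left _ _)
  have hηL : ‖L‖ * η ≤ ε / 2 := by
    have h1 : η * (‖L‖ + 1) ≤ ε / 2 := (le_div_iff₀ (by positivity)).1 (min_le_right _ _)
    have h2 : 0 < η := lt_min one_pos (by positivity)
    nlinarith
  have hnorm : ‖((t, x, y) : ℝ × ℝ × ℝ)‖ ≤ |y| := by
    simp only [Prod.norm_def, Real.norm_eq_abs, max_le_iff]
    exact ⟨by linarith, by linarith, le_rfl⟩
  have hrest : ‖((t, x, 0) : ℝ × ℝ × ℝ)‖ ≤ η * |y| := by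
    simp only [Prod.norm_def, Real.norm_eq_abs, max_le_iff, abs_zero]
    exact ⟨ht', hx', (abs_nonneg t).trans ht'⟩
  have hsplit : L (t, x, y) = L (t, x, 0) + L (0, 0, 1) * y := by
    have : ((t, x, y) : ℝ × ℝ × ℝ) = (t, x, 0) + y • (0, 0, 1) := by simp
    rw [this, map_add, map_smul, smul_eq_mul, mul_comm y]
  have h1 : |Φ (t, x, y) - L (t, x, y)| ≤ ε / 2 * |y| := by
    have : ‖Φ (t, x, y) - L (t, x, y)‖ ≤ ε / 2 * ‖((t, x, y) : ℝ × ℝ × ℝ)‖ := happrox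
    exact this.trans (by gcongr)
  have h2 : |L (t, x, 0)| ≤ ε / 2 * |y| := calc
    |L (t, x, 0)| ≤ ‖L‖ * ‖((t, x, 0) : ℝ × ℝ × ℝ)‖ := L.le_opNorm _
    _ ≤ ‖L‖ * (η * |y|) := by gcongr
    _ = ‖L‖ * η * |y| := by ring
    _ ≤ ε / 2 * |y| := by gcongr
  calc |Φ (t, x, y) - L (0, 0, 1) * y|
      = |(Φ (t, x, y) - L (t, x, y)) + L (t, x, 0)| := by rw [hsplit]; ring_nf
    _ ≤ _ := (abs_add_le _ _).trans (by linarith)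

/-- Lemma 2.2, first part: for any `m > 0` and all `|x| ≤ m|y|³`, `0 < |y| ≤ δ`,
the equation `X(t,x,y) = -x` has a unique solution `t = T̃(x,y)` in the range
`|t| ≤ (4m/|f'_y(0)|) y²`, and `T̃` is `C²` on `{(x,y) : ∛(|x|/m) < |y| < δ}`. -/
theorem stmt_2
    (f g : ℝ → ℝ → ℝ) (X Y : ℝ → ℝ → ℝ → ℝ)
    (U : Set (ℝ × ℝ)) (hU : U ∈ nhds ((0 : ℝ), (0 : ℝ)))
    (hf : ContDiffOn ℝ 4 (fun p : ℝ × ℝ => f p.1 p.2) U)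
    (hg : ContDiffOn ℝ 4 (fun p : ℝ × ℝ => g p.1 p.2) U)
    (V : Set (ℝ × ℝ × ℝ)) (hV : V ∈ nhds (((0 : ℝ), (0 : ℝ), (0 : ℝ)) : ℝ × ℝ × ℝ))
    (hX : ContDiffOn ℝ 4 (fun p : ℝ × ℝ × ℝ => X p.1 p.2.1 p.2.2) V)
    (hY : ContDiffOn ℝ 4 (fun p : ℝ × ℝ × ℝ => Y p.1 p.2.1 p.2.2) V)
    (hode : ∀ t x y : ℝ, (t, x, y) ∈ V →
      HasDerivAt (fun s => X s x y) (f (X t x y) (Y t x y)) t ∧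
      HasDerivAt (fun s => Y s x y) (g (X t x y) (Y t x y)) t)
    (hinit : ∀ x y : ℝ, X 0 x y = x ∧ Y 0 x y = y)
    (hf0 : f 0 0 = 0)
    (hfy0 : pdy f 0 0 ≠ 0) :
    ∀ m : ℝ, 0 < m → ∃ δ > (0 : ℝ), ∃ Tt : ℝ → ℝ → ℝ,
      (∀ x y : ℝ, |x| ≤ m * |y| ^ 3 → 0 < |y| → |y| ≤ δ →
        X (Tt x y) x y = -x ∧
        |Tt x y| ≤ 4 * m / |pdy f 0 0| * y ^ 2 ∧
        ∀ t : ℝ, |t| ≤ 4 * m / |pdy f 0 0| * y ^ 2 → X t x y = -x → t = Tt x y) ∧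
      ContDiffOn ℝ 2 (fun p : ℝ × ℝ => Tt p.1 p.2)
        {p : ℝ × ℝ | cbrt (|p.1| / m) < |p.2| ∧ |p.2| < δ} := by
  intro m hm
  set c := pdy f 0 0
  have hcpos : 0 < |c| := abs_pos.2 hfy0
  have hX0 : X 0 0 0 = 0 := (hinit 0 0).1
  have hY0 : Y 0 0 0 = 0 := (hinit 0 0).2
  set Φ : ℝ × ℝ × ℝ → ℝ := fun p => f (X p.1 p.2.1 p.2.2) (Y p.1 p.2.1 p.2.2) with hΦ
  have hfd : DifferentiableAt ℝ (fun p : ℝ × ℝ => f p.1 p.2) (0, 0) :=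
    (hf.contDiffAt hU).differentiableAt (by norm_num)
  have hΦd : DifferentiableAt ℝ Φ 0 := by
    have hXd : DifferentiableAt ℝ (fun p : ℝ × ℝ × ℝ => X p.1 p.2.1 p.2.2) 0 :=
      (hX.contDiffAt hV).differentiableAt (by norm_num)
    have hYd : DifferentiableAt ℝ (fun p : ℝ × ℝ × ℝ => Y p.1 p.2.1 p.2.2) 0 :=
      (hY.contDiffAt hV).differentiableAt (by norm_num)
    refine DifferentiableAt.comp (g := fun p : ℝ × ℝ => f p.1 p.2) 0 ?_ (hXd.prodMk hYd)
    simpa [hX0, hY0] using hfd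
  have hΦ0 : Φ 0 = 0 := by simp [hΦ, hX0, hY0, hf0]
  have hLc : fderiv ℝ Φ 0 (0, 0, 1) = c := by
    have hcurve : HasDerivAt (fun y : ℝ => ((0, 0, y) : ℝ × ℝ × ℝ)) (0, 0, 1) 0 :=
      (hasDerivAt_const _ _).prodMk ((hasDerivAt_const _ _).prodMk (hasDerivAt_id _))
    have hcomp : HasDerivAt (fun y => Φ (0, 0, y)) (fderiv ℝ Φ 0 (0, 0, 1)) 0 :=
      HasFDerivAt.comp_hasDerivAt (l := Φ) (0 : ℝ) hΦd.hasFDerivAt hcurve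
    have hrestrict : (fun y => Φ (0, 0, y)) = fun y => f 0 y := by
      funext y
      simp [hΦ, hinit]
    rw [hrestrict] at hcomp
    exact hcomp.deriv.symm
  set K := 4 * m / |c| with hK
  have hKpos : 0 < K := by positivity
  obtain ⟨δ, hδ, hcusp⟩ := hΦd.hasFDerivAt.exists_forall_cusp_abs_sub_le hΦ0
    (interior_mem_nhds.2 hV) hKpos.le hm.le (by positivity : 0 < |c| / 4)
  rw [hLc] at hcusp
  have hlower : ∀ t x y : ℝ, |y| ≤ δ → |t| ≤ K * y ^ 2 → |x| ≤ m * |y| ^ 3 →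
      3 / 4 * (c * y) ^ 2 ≤ c * y * Φ (t, x, y) := by
    intro t x y hy ht hx
    have habs := (hcusp t x y hy ht hx).2
    have hmul : |c * y * (Φ (t, x, y) - c * y)| ≤ 1 / 4 * (c * y) ^ 2 := calc
      |c * y * (Φ (t, x, y) - c * y)| = |c * y| * |Φ (t, x, y) - c * y| := abs_mul _ _
      _ ≤ |c * y| * (|c| / 4 * |y|) := by gcongr
      _ = 1 / 4 * |c * y| ^ 2 := by rw [abs_mul]; ring
      _ = 1 / 4 * (c * y) ^ 2 := by rw [sq_abs]
    linarith [(abs_le.1 hmul).1]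
  have hroot : ∀ x y : ℝ, |x| ≤ m * |y| ^ 3 → 0 < |y| → |y| ≤ δ →
      ∃ t, |t| < K * y ^ 2 ∧ X t x y + x = 0 ∧
        ∀ s, |s| ≤ K * y ^ 2 → X s x y + x = 0 → s = t := by
    intro x y hx hy0 hy
    have hcy : c * y ≠ 0 := mul_ne_zero hfy0 (abs_pos.1 hy0)
    refine exists_unique_zero_of_le_mul_deriv (h' := fun t => Φ (t, x, y)) (a := c * y)
      (C := 3 / 4 * (c * y) ^ 2) (by positivity)
      (fun t ht => (hode t x y (interior_subset (hcusp t x y hy ht hx).1)).1.add_const x)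
      (fun t ht => hlower t x y hy ht hx) ?_
    have hlhs : |c * y * (X 0 x y + x)| = 2 * (|c| * |y|) * |x| := by
      rw [(hinit x y).1, ← two_mul, abs_mul, abs_mul, abs_mul, abs_two]
      ring
    have hrhs : 3 / 4 * (c * y) ^ 2 * (K * y ^ 2) = 3 * (|c| * |y|) * (m * |y| ^ 3) := by
      rw [← sq_abs (c * y), ← sq_abs y, abs_mul, hK]
      field_simp
    rw [hlhs, hrhs]
    have hpos : 0 < |c| * |y| := by positivity
    have hpos' : 0 < m * |y| ^ 3 := by positivity
    nlinarith [mul_le_mul_of_nonneg_left hx hpos.le, mul_pos hpos hpos']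
  choose! Tt hTlt hTzero hTuniq using hroot
  refine ⟨δ, hδ, Tt, fun x y hx hy0 hy => ⟨?_, (hTlt x y hx hy0 hy).le, ?_⟩, ?_⟩
  · linarith [hTzero x y hx hy0 hy]
  · intro t ht hXt
    exact hTuniq x y hx hy0 hy t ht (by linarith)
  have hregion : ∀ p : ℝ × ℝ, cbrt (|p.1| / m) < |p.2| → |p.1| < m * |p.2| ^ 3 ∧ 0 < |p.2| := by
    intro p hp
    have hnn : 0 ≤ |p.1| / m := by positivity
    have hcb : 0 ≤ cbrt (|p.1| / m) := Real.rpow_nonneg hnn _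
    have hcube : cbrt (|p.1| / m) ^ 3 = |p.1| / m := by
      rw [cbrt, ← Real.rpow_natCast, ← Real.rpow_mul hnn]
      norm_num
    have := pow_lt_pow_left₀ hp hcb three_ne_zero
    rw [hcube, div_lt_iff₀ hm] at this
    exact ⟨by linarith, hcb.trans_lt hp⟩
  rintro ⟨x, y⟩ ⟨hxy, hyδ⟩
  obtain ⟨hx, hy0⟩ := hregion _ hxy
  simp only at hx hy0 hyδ
  have hT := hTlt x y hx.le hy0 hyδ.le
  have hmem := (hcusp _ x y hyδ.le hT.le hx.le).1
  have hΦne : Φ (Tt x y, x, y) ≠ 0 := by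
    intro hzero
    have := hlower _ x y hyδ.le hT.le hx.le
    have hcy : c * y ≠ 0 := mul_ne_zero hfy0 (abs_pos.1 hy0)
    have : 0 < (c * y) ^ 2 := by positivity
    simp only [hzero, mul_zero] at *
    linarith
  have hG : ContDiffAt ℝ 4
      (fun q : (ℝ × ℝ) × ℝ => X q.2 q.1.1 q.1.2 + q.1.1) ((x, y), Tt x y) := by
    have hXat : ContDiffAt ℝ 4 (fun p : ℝ × ℝ × ℝ => X p.1 p.2.1 p.2.2) (Tt x y, x, y) :=
      hX.contDiffAt (mem_interior_iff_mem_nhds.1 hmem)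
    have hperm : ContDiffAt ℝ 4 (fun q : (ℝ × ℝ) × ℝ => ((q.2, q.1.1, q.1.2) : ℝ × ℝ × ℝ))
        ((x, y), Tt x y) := by fun_prop
    have hfst : ContDiffAt ℝ 4 (fun q : (ℝ × ℝ) × ℝ => q.1.1) ((x, y), Tt x y) := by fun_prop
    exact (ContDiffAt.comp (g := fun p : ℝ × ℝ × ℝ => X p.1 p.2.1 p.2.2)
      ((x, y), Tt x y) hXat hperm).add hfst
  obtain ⟨ψ, hψ, hψxy, hψzero⟩ := hG.exists_implicit_of_hasDerivAt (by norm_num)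
    ((hode _ x y (interior_subset hmem)).1.add_const x) hΦne
  refine ContDiffAt.contDiffWithinAt ((hψ.of_le (by norm_num)).congr_of_eventuallyEq ?_)
  have hψsmall : ∀ᶠ q : ℝ × ℝ in 𝓝 (x, y), |ψ q| < K * q.2 ^ 2 :=
    hψ.continuousAt.abs.eventually_lt (by fun_prop) (by simpa [hψxy] using hT)
  have hxsmall : ∀ᶠ q : ℝ × ℝ in 𝓝 (x, y), |q.1| < m * |q.2| ^ 3 :=
    ContinuousAt.eventually_lt (by fun_prop) (by fun_prop) hx
  have hypos : ∀ᶠ q : ℝ × ℝ in 𝓝 (x, y), 0 < |q.2| :=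
    ContinuousAt.eventually_lt (by fun_prop) (by fun_prop) hy0
  have hyδ' : ∀ᶠ q : ℝ × ℝ in 𝓝 (x, y), |q.2| < δ :=
    ContinuousAt.eventually_lt (by fun_prop) (by fun_prop) hyδ
  filter_upwards [hψzero, hψsmall, hxsmall, hypos, hyδ'] with q hq hqψ hqx hqy hqδ
  exact (hTuniq q.1 q.2 hqx.le hqy hqδ.le (ψ q) hqψ.le
    (hq.trans (hTzero x y hx.le hy0 hyδ.le))).symm
end

section
/- Assume f(0) = 0 and f'_y(0) ≠ 0. Let m > 0 and let T̃(x,y) be the unique solution of X(T̃(x,y),x,y) = −x with |T̃(x,y)| ≤ (4m/|f'_y(0)|)·y², defined for |x| ≤ m|y|³ and |y| small. Define 𝒫̃(x,y) = Y(T̃(x,y),x,y) and β = −2·g(0)/f'_y(0). Then the remainder ℛ̃(x,y) := 𝒫̃(x,y) − y − β·x/y satisfies: ℛ̃(x,y)/y² → 0, ℛ̃'_y(x,y)/y → 0, and ℛ̃'_x(x,y)·y → 0, all as |x| ≤ m|y|³, y → 0. -/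
open Set Filter Topology

/-- Partial derivative in the first variable. -/
noncomputable def pdx (f : ℝ → ℝ → ℝ) (a b : ℝ) : ℝ := deriv (fun x => f x b) a

open Asymptotics

/-- The points `(t, x, y)` with `y ≠ 0`, `|x| ≤ m|y|³` and `|t| ≤ K y²`. -/
def thinCone (m K : ℝ) : Set (ℝ × ℝ × ℝ) :=
  {p | p.2.2 ≠ 0 ∧ |p.2.1| ≤ m * |p.2.2| ^ 3 ∧ |p.1| ≤ K * p.2.2 ^ 2}

/-- A property holding near the origin of a thin cone holds for all its points with small `y`. -/
lemma exists_delta_of_eventually_thinCone {m K : ℝ} (hm : 0 ≤ m) (hK : 0 ≤ K)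
    {P : ℝ × ℝ × ℝ → Prop} (h : ∀ᶠ p in 𝓝 0 ⊓ 𝓟 (thinCone m K), P p) :
    ∃ δ > 0, ∀ t x y : ℝ, 0 < |y| → |y| ≤ δ → |x| ≤ m * |y| ^ 3 → |t| ≤ K * y ^ 2 →
      P (t, x, y) := by
  rw [eventually_inf_principal, Metric.eventually_nhds_iff] at h
  obtain ⟨r, hr, h⟩ := h
  refine ⟨min 1 (r / (2 * (1 + m + K))), by positivity, fun t x y hy0 hy hx ht => ?_⟩
  have hy1 : |y| ≤ 1 := hy.trans (min_le_left _ _)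
  have hyr : |y| * (2 * (1 + m + K)) ≤ r :=
    (le_div_iff₀ (by positivity)).1 (hy.trans (min_le_right _ _))
  have h3 : |y| ^ 3 ≤ |y| := by
    simpa using pow_le_pow_of_le_one hy0.le hy1 (show 1 ≤ 3 by norm_num)
  have h2 : y ^ 2 ≤ |y| := by
    rw [← sq_abs]
    simpa using pow_le_pow_of_le_one hy0.le hy1 (show 1 ≤ 2 by norm_num)
  have hx' : |x| ≤ m * |y| := hx.trans (by gcongr)
  have ht' : |t| ≤ K * |y| := ht.trans (by gcongr)
  have hmy : 0 ≤ m * |y| := by positivity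
  have hKy : 0 ≤ K * |y| := by positivity
  refine h ?_ ⟨abs_pos.1 hy0, hx, ht⟩
  rw [dist_zero_right]
  simp only [Prod.norm_def, Real.norm_eq_abs, sup_lt_iff]
  refine ⟨?_, ?_, ?_⟩ <;> nlinarith

section Cone

variable {m K : ℝ}

lemma isBigO_fst_thinCone :
    (fun p : ℝ × ℝ × ℝ => p.1) =O[𝓝 0 ⊓ 𝓟 (thinCone m K)] fun p => p.2.2 ^ 2 := by
  refine IsBigO.of_bound K (eventually_inf_principal.2 (.of_forall fun p hp => ?_))
  simpa using hp.2.2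

lemma isBigO_snd_thinCone :
    (fun p : ℝ × ℝ × ℝ => p.2.1) =O[𝓝 0 ⊓ 𝓟 (thinCone m K)] fun p => p.2.2 ^ 3 := by
  refine IsBigO.of_bound m (eventually_inf_principal.2 (.of_forall fun p hp => ?_))
  simpa using hp.2.1

lemma tendsto_third_thinCone :
    Tendsto (fun p : ℝ × ℝ × ℝ => p.2.2) (𝓝 0 ⊓ 𝓟 (thinCone m K)) (𝓝 0) := by
  have : Tendsto (fun p : ℝ × ℝ × ℝ => p.2.2) (𝓝 0) (𝓝 0) :=
    Continuous.tendsto' (by fun_prop) _ _ rfl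
  exact this.mono_left inf_le_left

lemma eventually_ne_thinCone : ∀ᶠ p in 𝓝 0 ⊓ 𝓟 (thinCone m K), p.2.2 ≠ 0 :=
  eventually_inf_principal.2 (.of_forall fun _ hp => hp.1)

lemma isLittleO_pow_thinCone {i j : ℕ} (h : i < j) :
    (fun p : ℝ × ℝ × ℝ => p.2.2 ^ j) =o[𝓝 0 ⊓ 𝓟 (thinCone m K)] fun p => p.2.2 ^ i :=
  (isLittleO_pow_pow h).comp_tendsto tendsto_third_thinCone

lemma isLittleO_fst_thinCone :
    (fun p : ℝ × ℝ × ℝ => p.1) =o[𝓝 0 ⊓ 𝓟 (thinCone m K)] fun p => p.2.2 := by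
  simpa using isBigO_fst_thinCone.trans_isLittleO
    (isLittleO_pow_thinCone (m := m) (K := K) (show 1 < 2 by norm_num))

lemma isLittleO_snd_thinCone :
    (fun p : ℝ × ℝ × ℝ => p.2.1) =o[𝓝 0 ⊓ 𝓟 (thinCone m K)] fun p => p.2.2 := by
  simpa using isBigO_snd_thinCone.trans_isLittleO
    (isLittleO_pow_thinCone (m := m) (K := K) (show 1 < 3 by norm_num))

lemma isBigO_id_thinCone :
    (fun p : ℝ × ℝ × ℝ => p) =O[𝓝 0 ⊓ 𝓟 (thinCone m K)] fun p => p.2.2 :=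
  isLittleO_fst_thinCone.isBigO.prod_left
    (isLittleO_snd_thinCone.isBigO.prod_left (isBigO_refl _ _))

/-- A function vanishing at the origin is, along a thin cone, asymptotic to its linear part in
`y`. -/
lemma HasFDerivAt.tendsto_div_thinCone {u : ℝ × ℝ × ℝ → ℝ} {u' : ℝ × ℝ × ℝ →L[ℝ] ℝ}
    (hu : HasFDerivAt u u' 0) (h0 : u 0 = 0) :
    Tendsto (fun p => u p / p.2.2) (𝓝 0 ⊓ 𝓟 (thinCone m K)) (𝓝 (u' (0, 0, 1))) := by
  have h1 : (fun p => u p - u' p) =o[𝓝 0 ⊓ 𝓟 (thinCone m K)] fun p => p.2.2 := by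
    have := (hu.isLittleO.mono (inf_le_left (b := 𝓟 (thinCone m K)))).trans_isBigO
      (by simpa using isBigO_id_thinCone)
    simpa [h0] using this
  have h2 : (fun p : ℝ × ℝ × ℝ => u' p - p.2.2 * u' (0, 0, 1))
      =o[𝓝 0 ⊓ 𝓟 (thinCone m K)] fun p => p.2.2 := by
    have he : ∀ p : ℝ × ℝ × ℝ, u' p - p.2.2 * u' (0, 0, 1) =
        u' (1, 0, 0) * p.1 + u' (0, 1, 0) * p.2.1 := by
      intro p
      have hp : p = p.1 • ((1, 0, 0) : ℝ × ℝ × ℝ) + p.2.1 • ((0, 1, 0) : ℝ × ℝ × ℝ)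
          + p.2.2 • ((0, 0, 1) : ℝ × ℝ × ℝ) := by ext <;> simp
      have := congrArg u' hp
      simp only [map_add, map_smul, smul_eq_mul] at this
      linarith
    simp only [he]
    exact (isLittleO_fst_thinCone.const_mul_left _).add (isLittleO_snd_thinCone.const_mul_left _)
  have h3 := (h1.add h2).tendsto_div_nhds_zero.add_const (u' (0, 0, 1))
  rw [zero_add] at h3
  refine h3.congr' ?_
  filter_upwards [eventually_ne_thinCone] with p hp
  field_simp
  ring

/-- The increment in `t` of a strictly differentiable function, compared with `y²`. -/
lemma HasStrictFDerivAt.tendsto_sub_div_sq_thinCone {u : ℝ × ℝ × ℝ → ℝ}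
    {u' : ℝ × ℝ × ℝ →L[ℝ] ℝ} (hu : HasStrictFDerivAt u u' 0) :
    Tendsto (fun p => (u p - u (0, p.2) - p.1 * u' (1, 0, 0)) / p.2.2 ^ 2)
      (𝓝 0 ⊓ 𝓟 (thinCone m K)) (𝓝 0) := by
  have ht : Tendsto (fun p : ℝ × ℝ × ℝ => (p, ((0, p.2) : ℝ × ℝ × ℝ)))
      (𝓝 0 ⊓ 𝓟 (thinCone m K)) (𝓝 (0, 0)) := by
    have : Tendsto (fun p : ℝ × ℝ × ℝ => (p, ((0, p.2) : ℝ × ℝ × ℝ))) (𝓝 0) (𝓝 (0, 0)) :=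
      Continuous.tendsto' (by fun_prop) _ _ rfl
    exact this.mono_left inf_le_left
  have h1 := hu.isLittleO.comp_tendsto ht
  have h2 : ∀ p : ℝ × ℝ × ℝ, p - (0, p.2) = p.1 • ((1, 0, 0) : ℝ × ℝ × ℝ) := by
    intro p; ext <;> simp
  refine IsLittleO.tendsto_div_nhds_zero ?_
  refine (h1.congr_left ?_).trans_isBigO (IsBigO.trans ?_ isBigO_fst_thinCone)
  · intro p
    simp only [Function.comp_apply, h2, map_smul, smul_eq_mul]
  · refine IsBigO.of_bound 1 (.of_forall fun p => ?_)
    simp only [Function.comp_apply, h2, norm_smul]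
    simp [Prod.norm_def]

end Cone

/-- One-variable implicit differentiation along a curve, relative to a set. -/
lemma hasDerivWithinAt_of_implicit {H : ℝ × ℝ × ℝ → ℝ} {H' : ℝ × ℝ × ℝ →L[ℝ] ℝ}
    {τ : ℝ → ℝ} {c : ℝ → ℝ × ℝ} {v : ℝ × ℝ} {S : Set ℝ} {s₀ : ℝ}
    (hH : HasFDerivAt H H' (τ s₀, c s₀)) (hc : HasDerivWithinAt c v S s₀)
    (hτ : ContinuousWithinAt τ S s₀) (hS : ∀ s ∈ S, H (τ s, c s) = H (τ s₀, c s₀))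
    (hne : H' (1, 0) ≠ 0) :
    HasDerivWithinAt τ (-H' (0, v) / H' (1, 0)) S s₀ := by
  set a := H' (1, 0) with ha
  set l := 𝓝[S] s₀
  have ht : Tendsto (fun s => (τ s, c s)) l (𝓝 (τ s₀, c s₀)) :=
    hτ.tendsto.prodMk_nhds hc.continuousWithinAt.tendsto
  have h1 := hH.isLittleO.comp_tendsto ht
  have hco := (hasDerivWithinAt_iff_isLittleO.1 hc)
  have hcO : (fun s => c s - c s₀) =O[l] fun s => s - s₀ := by
    have := hco.isBigO.add (isBigO_of_le' (c := ‖v‖) l (f := fun s => (s - s₀) • v)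
      (g := fun s => s - s₀) (fun s => by rw [norm_smul, mul_comm]))
    simpa using this
  set w : ℝ → ℝ := fun s => τ s - τ s₀ - (s - s₀) * (-H' (0, v) / a) with hw
  have hsplit : ∀ s, (τ s, c s) - (τ s₀, c s₀) = (τ s - τ s₀) • ((1, 0) : ℝ × ℝ × ℝ)
      + (0, c s - c s₀) := by
    intro s; ext <;> simp
  have hlin : (fun s => H' (0, c s - c s₀ - (s - s₀) • v)) =o[l] fun s => s - s₀ :=
    ((H'.comp (.inr ℝ ℝ (ℝ × ℝ))).isBigO_comp _ _).trans_isLittleO hco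
  have hwO : (fun s => τ s - τ s₀) =O[l] fun s => ‖w s‖ + ‖s - s₀‖ := by
    refine IsBigO.of_bound (1 + ‖-H' (0, v) / a‖) (.of_forall fun s => ?_)
    have : τ s - τ s₀ = w s + (s - s₀) * (-H' (0, v) / a) := by simp [hw]
    rw [this]
    refine (norm_add_le _ _).trans ?_
    rw [norm_mul, Real.norm_of_nonneg (by positivity : 0 ≤ ‖w s‖ + ‖s - s₀‖)]
    nlinarith [norm_nonneg (w s), norm_nonneg (s - s₀), norm_nonneg (-H' (0, v) / a)]
  have hsO : (fun s => s - s₀) =O[l] fun s => ‖w s‖ + ‖s - s₀‖ := by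
    refine IsBigO.of_bound 1 (.of_forall fun s => ?_)
    rw [Real.norm_of_nonneg (by positivity : 0 ≤ ‖w s‖ + ‖s - s₀‖)]
    linarith [norm_nonneg (w s)]
  have h2 : (fun s => H' ((τ s, c s) - (τ s₀, c s₀))) =o[l] fun s => ‖w s‖ + ‖s - s₀‖ := by
    have h3 : (fun s => -H' ((τ s, c s) - (τ s₀, c s₀))) =o[l] fun s => ‖w s‖ + ‖s - s₀‖ := by
      refine (h1.congr' ?_ (EventuallyEq.refl _ _)).trans_isBigO ?_
      · filter_upwards [self_mem_nhdsWithin] with s hs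
        simp only [Function.comp_apply, hS s hs]
        ring
      · exact hwO.prod_left (hcO.trans hsO)
    simpa using h3.neg_left
  have h4 : w =o[l] fun s => ‖w s‖ + ‖s - s₀‖ := by
    have h5 := (h2.sub (hlin.trans_isBigO hsO)).const_mul_left a⁻¹
    refine h5.congr_left fun s => ?_
    have e1 : ((0, c s - c s₀) : ℝ × ℝ × ℝ)
        = (0, c s - c s₀ - (s - s₀) • v) + (s - s₀) • (0, v) := by ext <;> simp
    rw [hsplit s, map_add, map_smul, e1, map_add, map_smul]
    simp only [smul_eq_mul, hw, ← ha]
    field_simp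
    ring
  rw [hasDerivWithinAt_iff_isLittleO]
  refine IsLittleO.of_bound fun ε hε => ?_
  filter_upwards [h4.bound (show 0 < min (1 / 2) (ε / 2) by positivity)] with s hs
  rw [Real.norm_of_nonneg (by positivity : 0 ≤ ‖w s‖ + ‖s - s₀‖)] at hs
  have hA : ‖w s‖ ≤ 1 / 2 * (‖w s‖ + ‖s - s₀‖) :=
    hs.trans (mul_le_mul_of_nonneg_right (min_le_left _ _) (by positivity))
  have hB : ‖w s‖ ≤ ε / 2 * (‖w s‖ + ‖s - s₀‖) :=
    hs.trans (mul_le_mul_of_nonneg_right (min_le_right _ _) (by positivity))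
  have hC : ‖w s‖ ≤ ‖s - s₀‖ := by linarith
  have : ‖w s‖ ≤ ε * ‖s - s₀‖ := by nlinarith
  simpa [hw] using this

/-- Second-order Taylor data at the origin of a planar flow `(φ, ψ)`, read as functions of
`(t, x, y)`, whose first component has vanishing velocity at the origin and velocity `a * y` to
first order along the `y`-axis, and whose second component has velocity `b` at the origin. -/
structure FlowJet (φ ψ : ℝ × ℝ × ℝ → ℝ) (a b : ℝ) : Prop where
  contDiffAt_fst : ContDiffAt ℝ 2 φ 0
  contDiffAt_snd : ContDiffAt ℝ 2 ψ 0
  fst_zero : ∀ q : ℝ × ℝ, φ (0, q) = q.1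
  snd_zero : ∀ q : ℝ × ℝ, ψ (0, q) = q.2
  fderiv_fst_zero : fderiv ℝ φ 0 (1, 0, 0) = 0
  fderiv_fderiv_fst : fderiv ℝ (fderiv ℝ φ) 0 (0, 0, 1) (1, 0, 0) = a
  fderiv_snd_zero : fderiv ℝ ψ 0 (1, 0, 0) = b
  ne_zero : a ≠ 0

namespace FlowJet

variable {φ ψ : ℝ × ℝ × ℝ → ℝ} {a b m K : ℝ}

lemma eventually_differentiableAt {u : ℝ × ℝ × ℝ → ℝ} (hu : ContDiffAt ℝ 2 u 0) :
    ∀ᶠ p in 𝓝 0, DifferentiableAt ℝ u p :=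
  (hu.eventually (by simp)).mono fun _ hp => hp.differentiableAt (by norm_num)

lemma hasStrictFDerivAt_fderiv {u : ℝ × ℝ × ℝ → ℝ} (hu : ContDiffAt ℝ 2 u 0)
    (v : ℝ × ℝ × ℝ) :
    HasStrictFDerivAt (fun p => fderiv ℝ u p v)
      ((ContinuousLinearMap.apply ℝ ℝ v).comp (fderiv ℝ (fderiv ℝ u) 0)) 0 := by
  have h : ContDiffAt ℝ 1 (fderiv ℝ u) 0 := hu.fderiv_right (by norm_num)
  exact (ContinuousLinearMap.apply ℝ ℝ v).hasStrictFDerivAt.comp _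
    (h.hasStrictFDerivAt (by norm_num))

lemma tendsto_fderiv {u : ℝ × ℝ × ℝ → ℝ} (hu : ContDiffAt ℝ 2 u 0) (v : ℝ × ℝ × ℝ) :
    Tendsto (fun p => fderiv ℝ u p v) (𝓝 0) (𝓝 (fderiv ℝ u 0 v)) :=
  (hasStrictFDerivAt_fderiv hu v).hasFDerivAt.continuousAt.tendsto

lemma eventually_fderiv_of_eq_initial {u : ℝ × ℝ × ℝ → ℝ} (hu : ContDiffAt ℝ 2 u 0)
    {L : ℝ × ℝ →L[ℝ] ℝ} (h : ∀ q, u (0, q) = L q) (v : ℝ × ℝ) :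
    ∀ᶠ p in 𝓝 (0 : ℝ × ℝ × ℝ), fderiv ℝ u (0, p.2) (0, v) = L v := by
  have ht : Tendsto (fun p : ℝ × ℝ × ℝ => ((0, p.2) : ℝ × ℝ × ℝ)) (𝓝 0) (𝓝 0) :=
    Continuous.tendsto' (by fun_prop) _ _ rfl
  filter_upwards [ht.eventually (eventually_differentiableAt hu)] with p hp
  have h1 : HasFDerivAt (fun q : ℝ × ℝ => u (0, q))
      ((fderiv ℝ u (0, p.2)).comp (.inr ℝ ℝ (ℝ × ℝ))) p.2 :=
    hp.hasFDerivAt.comp p.2 (hasFDerivAt_prodMk_right 0 p.2)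
  have h2 : HasFDerivAt (fun q : ℝ × ℝ => u (0, q)) L p.2 := by
    simp only [h]; exact L.hasFDerivAt
  simpa using DFunLike.congr_fun (h1.unique h2) v

lemma tendsto_velocity_div (h : FlowJet φ ψ a b) :
    Tendsto (fun p => fderiv ℝ φ p (1, 0, 0) / p.2.2) (𝓝 0 ⊓ 𝓟 (thinCone m K)) (𝓝 a) := by
  have := (hasStrictFDerivAt_fderiv h.contDiffAt_fst (1, 0, 0)).hasFDerivAt.tendsto_div_thinCone
    (m := m) (K := K) h.fderiv_fst_zero
  simpa [h.fderiv_fderiv_fst] using this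

lemma fderiv_fderiv_fst_symm (h : FlowJet φ ψ a b) :
    fderiv ℝ (fderiv ℝ φ) 0 (1, 0, 0) (0, 0, 1) = a := by
  rw [← h.fderiv_fderiv_fst]
  exact (h.contDiffAt_fst.isSymmSndFDerivAt (by simp)).eq _ _

/-- Increments in `t` of the first component along a thin cone are `a * y` times the increment of
`t`, up to a small relative error. -/
lemma exists_abs_sub_sub_le (h : FlowJet φ ψ a b) (hm : 0 ≤ m) (hK : 0 ≤ K) {ε : ℝ}
    (hε : 0 < ε) :
    ∃ δ > 0, ∀ x y : ℝ, 0 < |y| → |y| ≤ δ → |x| ≤ m * |y| ^ 3 → ∀ t₁ t₂ : ℝ,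
      |t₁| ≤ K * y ^ 2 → |t₂| ≤ K * y ^ 2 →
      |φ (t₁, x, y) - φ (t₂, x, y) - a * y * (t₁ - t₂)| ≤ ε * |y| * |t₁ - t₂| := by
  have h1 : ∀ᶠ p in 𝓝 0 ⊓ 𝓟 (thinCone m K), DifferentiableAt ℝ φ p ∧
      |fderiv ℝ φ p (1, 0, 0) / p.2.2 - a| < ε := by
    refine ((eventually_differentiableAt h.contDiffAt_fst).filter_mono inf_le_left).and ?_
    simpa [Real.dist_eq] using (Metric.tendsto_nhds.1 h.tendsto_velocity_div) ε hε
  obtain ⟨δ, hδ, H⟩ := exists_delta_of_eventually_thinCone hm hK h1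
  refine ⟨δ, hδ, fun x y hy0 hy hx t₁ t₂ ht₁ ht₂ => ?_⟩
  have hd : ∀ t ∈ Icc (-(K * y ^ 2)) (K * y ^ 2),
      HasDerivWithinAt (fun s => φ (s, x, y) - a * y * s)
        (fderiv ℝ φ (t, x, y) (1, 0, 0) - a * y) (Icc (-(K * y ^ 2)) (K * y ^ 2)) t := by
    intro t ht
    have hφ := (H t x y hy0 hy hx (abs_le.2 ht)).1.hasFDerivAt
    have hc : HasDerivAt (fun s : ℝ => ((s, x, y) : ℝ × ℝ × ℝ)) (1, 0, 0) t :=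
      (hasDerivAt_id t).prodMk (hasDerivAt_const t (x, y))
    have h2 : HasDerivAt (fun s => φ (s, x, y) - a * y * s)
        (fderiv ℝ φ (t, x, y) (1, 0, 0) - a * y * 1) t :=
      (hφ.comp_hasDerivAt t hc).sub ((hasDerivAt_id t).const_mul (a * y))
    rw [mul_one] at h2
    exact h2.hasDerivWithinAt
  have hb : ∀ t ∈ Icc (-(K * y ^ 2)) (K * y ^ 2),
      ‖fderiv ℝ φ (t, x, y) (1, 0, 0) - a * y‖ ≤ ε * |y| := by
    intro t ht
    have h2 := (H t x y hy0 hy hx (abs_le.2 ht)).2.le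
    have hy' : y ≠ 0 := abs_pos.1 hy0
    have h3 : fderiv ℝ φ (t, x, y) (1, 0, 0) - a * y
        = (fderiv ℝ φ (t, x, y) (1, 0, 0) / y - a) * y := by field_simp
    rw [h3, norm_mul, Real.norm_eq_abs, Real.norm_eq_abs]
    gcongr
  have := (convex_Icc _ _).norm_image_sub_le_of_norm_hasDerivWithin_le hd hb
    (abs_le.1 ht₂) (abs_le.1 ht₁)
  simp only [Real.norm_eq_abs] at this
  convert this using 2
  ring

lemma tendsto_time (h : FlowJet φ ψ a b) (hm : 0 ≤ m) (hK : 0 ≤ K) :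
    Tendsto (fun p : ℝ × ℝ × ℝ => (a * p.2.2 * p.1 + 2 * p.2.1) / p.2.2 ^ 3)
      (𝓝 0 ⊓ 𝓟 (thinCone m K) ⊓ 𝓟 {p | φ p = -p.2.1}) (𝓝 0) := by
  refine IsLittleO.tendsto_div_nhds_zero (IsLittleO.of_bound fun ε hε => ?_)
  obtain ⟨δ, hδ, H⟩ := h.exists_abs_sub_sub_le hm hK (show 0 < ε / (K + 1) by positivity)
  have hδ' : ∀ᶠ p in 𝓝 0 ⊓ 𝓟 (thinCone m K), |p.2.2| < δ := by
    simpa [Real.dist_eq] using Metric.tendsto_nhds.1 tendsto_third_thinCone δ hδ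
  refine eventually_inf_principal.2 ?_
  filter_upwards [hδ', mem_inf_of_right (mem_principal_self _)] with p hp hc hφ
  obtain ⟨hy, hx, ht⟩ := hc
  have h1 := H p.2.1 p.2.2 (abs_pos.2 hy) hp.le hx p.1 0 ht
    (by rw [abs_zero]; positivity)
  rw [h.fst_zero, show φ (p.1, p.2.1, p.2.2) = -p.2.1 from hφ, sub_zero] at h1
  rw [Real.norm_eq_abs, norm_pow, Real.norm_eq_abs, ← abs_neg]
  calc |-(a * p.2.2 * p.1 + 2 * p.2.1)| = |-p.2.1 - p.2.1 - a * p.2.2 * p.1| := by ring_nf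
    _ ≤ ε / (K + 1) * |p.2.2| * |p.1| := h1
    _ ≤ ε / (K + 1) * |p.2.2| * ((K + 1) * |p.2.2| ^ 2) := by
      rw [sq_abs]
      gcongr
      exact ht.trans (by gcongr; linarith)
    _ = ε * |p.2.2| ^ 3 := by field_simp

lemma tendsto_remainder (h : FlowJet φ ψ a b) (hm : 0 ≤ m) (hK : 0 ≤ K) :
    Tendsto (fun p : ℝ × ℝ × ℝ => (ψ p - p.2.2 - -2 * b / a * p.2.1 / p.2.2) / p.2.2 ^ 2)
      (𝓝 0 ⊓ 𝓟 (thinCone m K) ⊓ 𝓟 {p | φ p = -p.2.1}) (𝓝 0) := by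
  have h1 := ((h.contDiffAt_snd.hasStrictFDerivAt
    (by norm_num)).tendsto_sub_div_sq_thinCone (m := m) (K := K)).mono_left
      (inf_le_left (b := 𝓟 {p | φ p = -p.2.1}))
  have h2 := h1.add ((h.tendsto_time hm hK).const_mul (b / a))
  rw [mul_zero, add_zero] at h2
  refine h2.congr' ?_
  filter_upwards [eventually_ne_thinCone.filter_mono inf_le_left] with p hp
  rw [h.snd_zero, h.fderiv_snd_zero]
  have ha := h.ne_zero
  field_simp
  ring

lemma fderiv_fst_x (h : FlowJet φ ψ a b) : fderiv ℝ φ 0 (0, 1, 0) = 1 := by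
  exact (eventually_fderiv_of_eq_initial h.contDiffAt_fst
    (L := .fst ℝ ℝ ℝ) h.fst_zero (1, 0)).self_of_nhds

lemma tendsto_remainder_x (h : FlowJet φ ψ a b) :
    Tendsto (fun p : ℝ × ℝ × ℝ => (fderiv ℝ ψ p (1, 0, 0) *
        (-(fderiv ℝ φ p (0, 1, 0) + 1) / fderiv ℝ φ p (1, 0, 0)) +
        fderiv ℝ ψ p (0, 1, 0) - -2 * b / a / p.2.2) * p.2.2)
      (𝓝 0 ⊓ 𝓟 (thinCone m K)) (𝓝 0) := by
  have l {u : ℝ × ℝ × ℝ → ℝ} (hu : ContDiffAt ℝ 2 u 0) (v : ℝ × ℝ × ℝ) :=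
    (tendsto_fderiv hu v).mono_left (inf_le_left (b := 𝓟 (thinCone m K)))
  have h1 := (((l h.contDiffAt_snd (1, 0, 0)).mul
    ((((l h.contDiffAt_fst (0, 1, 0)).add_const 1).neg).div h.tendsto_velocity_div
      h.ne_zero)).add ((l h.contDiffAt_snd (0, 1, 0)).mul tendsto_third_thinCone)).sub_const
      (-2 * b / a)
  have h0 : fderiv ℝ ψ 0 (1, 0, 0) * (-(fderiv ℝ φ 0 (0, 1, 0) + 1) / a)
      + fderiv ℝ ψ 0 (0, 1, 0) * 0 - -2 * b / a = 0 := by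
    rw [h.fderiv_snd_zero, h.fderiv_fst_x]; ring
  rw [h0] at h1
  refine h1.congr' ?_
  filter_upwards [eventually_ne_thinCone,
    (h.tendsto_velocity_div (m := m) (K := K)).eventually_ne h.ne_zero] with p hp hv
  have hv' : fderiv ℝ φ p (1, 0, 0) ≠ 0 := fun h => hv (by simp [h])
  have ha := h.ne_zero
  simp only [Pi.div_apply]
  field_simp

lemma tendsto_remainder_y (h : FlowJet φ ψ a b) (hm : 0 ≤ m) (hK : 0 ≤ K) :
    Tendsto (fun p : ℝ × ℝ × ℝ => (fderiv ℝ ψ p (1, 0, 0) *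
        (-fderiv ℝ φ p (0, 0, 1) / fderiv ℝ φ p (1, 0, 0)) +
        fderiv ℝ ψ p (0, 0, 1) - 1 + -2 * b / a * p.2.1 / p.2.2 ^ 2) / p.2.2)
      (𝓝 0 ⊓ 𝓟 (thinCone m K) ⊓ 𝓟 {p | φ p = -p.2.1}) (𝓝 0) := by
  set l := 𝓝 0 ⊓ 𝓟 (thinCone m K) ⊓ 𝓟 {p | φ p = -p.2.1}
  have hle : l ≤ 𝓝 0 ⊓ 𝓟 (thinCone m K) := inf_le_left
  have hle0 : l ≤ 𝓝 0 := hle.trans inf_le_left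
  have hv : Tendsto (fun p => fderiv ℝ φ p (1, 0, 0) / p.2.2) l (𝓝 a) :=
    h.tendsto_velocity_div.mono_left hle
  have hψt : Tendsto (fun p => fderiv ℝ ψ p (1, 0, 0)) l (𝓝 b) := by
    rw [← h.fderiv_snd_zero]
    exact (tendsto_fderiv h.contDiffAt_snd _).mono_left hle0
  have hA := ((hasStrictFDerivAt_fderiv h.contDiffAt_fst
    (0, 0, 1)).tendsto_sub_div_sq_thinCone (m := m) (K := K)).mono_left hle
  have hB := ((hasStrictFDerivAt_fderiv h.contDiffAt_snd
    (0, 0, 1)).tendsto_sub_div_sq_thinCone (m := m) (K := K)).mono_left hle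
  set d := ((ContinuousLinearMap.apply ℝ ℝ ((0, 0, 1) : ℝ × ℝ × ℝ)).comp
    (fderiv ℝ (fderiv ℝ ψ) 0)) (1, 0, 0)
  have hE : Tendsto (fun p : ℝ × ℝ × ℝ => (a * p.2.2 * p.1 + 2 * p.2.1) / p.2.2 ^ 3) l (𝓝 0) :=
    h.tendsto_time hm hK
  have hy : Tendsto (fun p : ℝ × ℝ × ℝ => p.2.2) l (𝓝 0) := tendsto_third_thinCone.mono_left hle
  have ht : Tendsto (fun p : ℝ × ℝ × ℝ => p.1 / p.2.2) l (𝓝 0) :=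
    isLittleO_fst_thinCone.tendsto_div_nhds_zero.mono_left hle
  have hbr : Tendsto (fun p : ℝ × ℝ × ℝ => 2 * fderiv ℝ ψ p (1, 0, 0) /
      (fderiv ℝ φ p (1, 0, 0) / p.2.2) + -2 * b / a) l (𝓝 0) := by
    have := ((hψt.const_mul 2).div hv h.ne_zero).add_const (-2 * b / a)
    rwa [show 2 * b / a + -2 * b / a = 0 by ring] at this
  have hξ : Tendsto (fun p : ℝ × ℝ × ℝ => (2 * fderiv ℝ ψ p (1, 0, 0) /
      (fderiv ℝ φ p (1, 0, 0) / p.2.2) + -2 * b / a) * (p.2.1 / p.2.2 ^ 3)) l (𝓝 0) := by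
    refine hbr.zero_mul_isBoundedUnder_le ⟨m, ?_⟩
    rw [eventually_map]
    filter_upwards [hle (mem_inf_of_right (mem_principal_self _))] with p hp
    rw [Function.comp_apply, norm_div, norm_pow]
    exact div_le_of_le_mul₀ (by positivity) hm hp.2.1
  have hsum := ((((hψt.mul ((hA.add hE).neg.div hv h.ne_zero))).add (hB.mul hy)).add
    (ht.const_mul d)).add hξ
  rw [show b * (-(0 + 0) / a) + 0 * 0 + d * 0 + 0 = 0 by ring] at hsum
  refine hsum.congr' ?_
  have i1 := hle0 (eventually_fderiv_of_eq_initial h.contDiffAt_fst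
    (L := .fst ℝ ℝ ℝ) h.fst_zero (0, 1))
  have i2 := hle0 (eventually_fderiv_of_eq_initial h.contDiffAt_snd
    (L := .snd ℝ ℝ ℝ) h.snd_zero (0, 1))
  filter_upwards [eventually_ne_thinCone.filter_mono hle, hv.eventually_ne h.ne_zero, i1, i2]
    with p hp hv e1 e2
  have hv' : fderiv ℝ φ p (1, 0, 0) ≠ 0 := fun h => hv (by simp [h])
  have ha := h.ne_zero
  simp only [Pi.div_apply, e1, e2, ContinuousLinearMap.comp_apply,
    ContinuousLinearMap.apply_apply, h.fderiv_fderiv_fst_symm, ContinuousLinearMap.coe_fst',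
    ContinuousLinearMap.coe_snd']
  field_simp
  ring

/-- Along any curve in a thin cone on which `|y|` is minimal at the base point, the second component
of the flow, evaluated at the time when the first component is reflected, has the derivative given
by implicit differentiation. -/
lemma exists_hasDerivWithinAt (h : FlowJet φ ψ a b) (hm : 0 ≤ m) (hK : 0 ≤ K) :
    ∃ δ > 0, ∀ (τ : ℝ → ℝ) (c : ℝ → ℝ × ℝ) (v : ℝ × ℝ) (S : Set ℝ), ∀ s₀ ∈ S, (c s₀).2 ≠ 0 →
      (∀ s ∈ S, |(c s₀).2| ≤ |(c s).2| ∧ |(c s).2| ≤ δ ∧ |(c s).1| ≤ m * |(c s).2| ^ 3 ∧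
        |τ s| ≤ K * (c s).2 ^ 2 ∧ φ (τ s, c s) = -(c s).1) →
      HasDerivWithinAt c v S s₀ →
      HasDerivWithinAt (fun s => ψ (τ s, c s))
        (fderiv ℝ ψ (τ s₀, c s₀) (1, 0) *
          (-(fderiv ℝ φ (τ s₀, c s₀) (0, v) + v.1) / fderiv ℝ φ (τ s₀, c s₀) (1, 0)) +
          fderiv ℝ ψ (τ s₀, c s₀) (0, v)) S s₀ := by
  have ha := h.ne_zero
  have h1 : ∀ᶠ p in 𝓝 0 ⊓ 𝓟 (thinCone m K), DifferentiableAt ℝ φ p ∧ DifferentiableAt ℝ ψ p ∧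
      fderiv ℝ φ p (1, 0, 0) / p.2.2 ≠ 0 :=
    ((eventually_differentiableAt h.contDiffAt_fst).filter_mono inf_le_left).and
      (((eventually_differentiableAt h.contDiffAt_snd).filter_mono inf_le_left).and
        (h.tendsto_velocity_div.eventually_ne ha))
  obtain ⟨δ₁, hδ₁, H₁⟩ := exists_delta_of_eventually_thinCone hm hK h1
  obtain ⟨δ₂, hδ₂, H₂⟩ := h.exists_abs_sub_sub_le hm hK (show 0 < |a| / 2 by positivity)
  refine ⟨min δ₁ δ₂, by positivity, fun τ c v S s₀ hs₀ hy₀ hS hc => ?_⟩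
  have hy₀' : 0 < |(c s₀).2| := abs_pos.2 hy₀
  obtain ⟨-, hyδ, hx₀, ht₀, hφ₀⟩ := hS s₀ hs₀
  obtain ⟨dφ, dψ, hv⟩ := H₁ (τ s₀) (c s₀).1 (c s₀).2 hy₀' (hyδ.trans (min_le_left _ _)) hx₀ ht₀
  have hv' : fderiv ℝ φ (τ s₀, c s₀) (1, 0) ≠ 0 := fun h => hv (div_eq_zero_iff.2 (.inl h))
  have hcont : ContinuousWithinAt τ S s₀ := by
    have hlim : Tendsto (fun s => 2 / (|a| * |(c s₀).2|) * |(c s).1 + φ (τ s₀, c s)|)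
        (𝓝[S] s₀) (𝓝 0) := by
      have hcc := hc.continuousWithinAt
      have hφc : ContinuousWithinAt (fun s => φ (τ s₀, c s)) S s₀ :=
        ContinuousAt.comp_continuousWithinAt (f := fun s => (τ s₀, c s)) dφ.continuousAt
          (continuousWithinAt_const.prodMk hcc)
      have h2 : ContinuousWithinAt
          (fun s => 2 / (|a| * |(c s₀).2|) * |(c s).1 + φ (τ s₀, c s)|) S s₀ :=
        (hcc.fst.add hφc).abs.const_mul _
      simpa [hφ₀] using h2.tendsto
    refine tendsto_iff_dist_tendsto_zero.2 (squeeze_zero' (.of_forall fun _ => dist_nonneg) ?_ hlim)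
    filter_upwards [self_mem_nhdsWithin] with s hs
    obtain ⟨hyy, hyδ, hx, ht, hφ⟩ := hS s hs
    have hy : 0 < |(c s).2| := hy₀'.trans_le hyy
    have hsq : (c s₀).2 ^ 2 ≤ (c s).2 ^ 2 := sq_le_sq.2 hyy
    have h2 := H₂ (c s).1 (c s).2 hy (hyδ.trans (min_le_right _ _)) hx (τ s) (τ s₀) ht
      (ht₀.trans (by gcongr))
    rw [show φ (τ s, (c s).1, (c s).2) = -(c s).1 from hφ] at h2
    change |-(c s).1 - φ (τ s₀, c s) - _| ≤ _ at h2
    have h3 : |a| * |(c s).2| * |τ s - τ s₀| ≤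
        |(c s).1 + φ (τ s₀, c s)| + |a| / 2 * |(c s).2| * |τ s - τ s₀| := by
      rw [← abs_mul, ← abs_mul]
      calc |a * (c s).2 * (τ s - τ s₀)|
          = |(-((c s).1 + φ (τ s₀, c s))) -
              (-(c s).1 - φ (τ s₀, c s) - a * (c s).2 * (τ s - τ s₀))| := by ring_nf
        _ ≤ _ := (abs_sub _ _).trans (by rw [abs_neg]; gcongr)
    have h4 : |a| * |(c s₀).2| * |τ s - τ s₀| ≤ |a| * |(c s).2| * |τ s - τ s₀| := by gcongr
    rw [Real.dist_eq, div_mul_eq_mul_div, le_div_iff₀ (by positivity)]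
    linarith
  have hH : HasFDerivAt (fun p : ℝ × ℝ × ℝ => φ p + p.2.1)
      (fderiv ℝ φ (τ s₀, c s₀) + (ContinuousLinearMap.fst ℝ ℝ ℝ).comp (.snd ℝ ℝ (ℝ × ℝ)))
      (τ s₀, c s₀) :=
    dφ.hasFDerivAt.add
      ((ContinuousLinearMap.fst ℝ ℝ ℝ).comp (.snd ℝ ℝ (ℝ × ℝ))).hasFDerivAt
  have hτ := hasDerivWithinAt_of_implicit hH hc hcont
    (fun s hs => by simp [(hS s hs).2.2.2.2, hφ₀]) (by simpa using hv')
  have hψ : HasDerivWithinAt (fun s => ψ (τ s, c s)) _ S s₀ :=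
    dψ.hasFDerivAt.comp_hasDerivWithinAt (f := fun s => (τ s, c s)) s₀ (hτ.prodMk hc)
  refine hψ.congr_deriv ?_
  have e (d : ℝ) : ((d, v) : ℝ × ℝ × ℝ) = d • (1, 0) + (0, v) := by ext <;> simp
  rw [e, map_add, map_smul, smul_eq_mul, mul_comm]
  simp

end FlowJet

lemma deriv_eq_zero_or_eq_of_hasDerivWithinAt {u : ℝ → ℝ} {u' s : ℝ} {S : Set ℝ}
    (hS : UniqueDiffWithinAt ℝ S s) (hu : HasDerivWithinAt u u' S s) :
    deriv u s = 0 ∨ deriv u s = u' := by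
  by_cases h : DifferentiableAt ℝ u s
  · exact .inr (hS.eq_deriv _ h.hasDerivAt.hasDerivWithinAt hu)
  · exact .inl (deriv_zero_of_not_differentiableAt h)

/-- The flow of a planar vector field `(f, g)` with `f 0 0 = 0`, `∂f/∂y ≠ 0` at the origin. -/
lemma flowJet_of_ode {f g : ℝ → ℝ → ℝ} {X Y : ℝ → ℝ → ℝ → ℝ}
    {V : Set (ℝ × ℝ × ℝ)} (hV : V ∈ 𝓝 ((0, 0, 0) : ℝ × ℝ × ℝ))
    (hX : ContDiffOn ℝ 2 (fun p : ℝ × ℝ × ℝ => X p.1 p.2.1 p.2.2) V)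
    (hY : ContDiffOn ℝ 2 (fun p : ℝ × ℝ × ℝ => Y p.1 p.2.1 p.2.2) V)
    (hode : ∀ t x y : ℝ, (t, x, y) ∈ V →
      HasDerivAt (fun s => X s x y) (f (X t x y) (Y t x y)) t ∧
      HasDerivAt (fun s => Y s x y) (g (X t x y) (Y t x y)) t)
    (hinit : ∀ x y : ℝ, X 0 x y = x ∧ Y 0 x y = y) (hf0 : f 0 0 = 0) (hfy0 : pdy f 0 0 ≠ 0) :
    FlowJet (fun p : ℝ × ℝ × ℝ => X p.1 p.2.1 p.2.2) (fun p : ℝ × ℝ × ℝ => Y p.1 p.2.1 p.2.2)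
      (pdy f 0 0) (g 0 0) := by
  have cX : ContDiffAt ℝ 2 (fun p : ℝ × ℝ × ℝ => X p.1 p.2.1 p.2.2) 0 := hX.contDiffAt hV
  have cY : ContDiffAt ℝ 2 (fun p : ℝ × ℝ × ℝ => Y p.1 p.2.1 p.2.2) 0 := hY.contDiffAt hV
  have time (u : ℝ × ℝ × ℝ → ℝ) (p : ℝ × ℝ × ℝ) (hu : DifferentiableAt ℝ u p) (d : ℝ)
      (hd : HasDerivAt (fun s => u (s, p.2)) d p.1) : fderiv ℝ u p (1, 0, 0) = d := by
    have hc : HasDerivAt (fun s : ℝ => ((s, p.2) : ℝ × ℝ × ℝ)) (1, 0) p.1 :=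
      (hasDerivAt_id _).prodMk (hasDerivAt_const _ _)
    exact (hu.hasFDerivAt.comp_hasDerivAt p.1 hc).unique hd
  have hV0 : ((0, 0, 0) : ℝ × ℝ × ℝ) ∈ V := mem_of_mem_nhds hV
  have hvel : ∀ᶠ p in 𝓝 (0 : ℝ × ℝ × ℝ),
      fderiv ℝ (fun p : ℝ × ℝ × ℝ => X p.1 p.2.1 p.2.2) p (1, 0, 0)
        = f (X p.1 p.2.1 p.2.2) (Y p.1 p.2.1 p.2.2) := by
    filter_upwards [hV, FlowJet.eventually_differentiableAt cX] with p hp hd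
    exact time _ p hd _ (hode p.1 p.2.1 p.2.2 hp).1
  refine ⟨cX, cY, fun q => (hinit _ _).1, fun q => (hinit _ _).2, ?_, ?_, ?_, hfy0⟩
  · rw [hvel.self_of_nhds]
    simp [hinit, hf0]
  · have hc : HasDerivAt (fun y : ℝ => ((0, 0, y) : ℝ × ℝ × ℝ)) (0, 0, 1) 0 :=
      (hasDerivAt_const _ _).prodMk ((hasDerivAt_const _ _).prodMk (hasDerivAt_id _))
    have h1 := (FlowJet.hasStrictFDerivAt_fderiv cX (1, 0, 0)).hasFDerivAt.comp_hasDerivAt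
      (0 : ℝ) hc
    have h2 := h1.deriv
    simp only [ContinuousLinearMap.comp_apply, ContinuousLinearMap.apply_apply] at h2
    rw [← h2, pdy]
    refine EventuallyEq.deriv_eq ?_
    have ht : Tendsto (fun y : ℝ => ((0, 0, y) : ℝ × ℝ × ℝ)) (𝓝 0) (𝓝 0) :=
      hc.continuousAt.tendsto
    filter_upwards [ht.eventually hvel] with y hy
    rw [Function.comp_apply, hy]
    simp [hinit]
  · refine time _ 0 (cY.differentiableAt (by norm_num)) _ ?_
    simpa [hinit] using (hode 0 0 0 hV0).2

/-- Lemma 2.2, second part: the map `𝒫̃(x,y) = Y(T̃(x,y),x,y)` expands as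
`𝒫̃(y) = y + β x/y + ℛ̃(x,y)` with `ℛ̃/y² → 0`, `ℛ̃'_y/y → 0` and `ℛ̃'_x·y → 0`
as `|x| ≤ m|y|³`, `y → 0`. -/
theorem stmt_4
    (f g : ℝ → ℝ → ℝ) (X Y : ℝ → ℝ → ℝ → ℝ)
    (U : Set (ℝ × ℝ)) (hU : U ∈ nhds ((0 : ℝ), (0 : ℝ)))
    (hf : ContDiffOn ℝ 4 (fun p : ℝ × ℝ => f p.1 p.2) U)
    (hg : ContDiffOn ℝ 4 (fun p : ℝ × ℝ => g p.1 p.2) U)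
    (V : Set (ℝ × ℝ × ℝ)) (hV : V ∈ nhds (((0 : ℝ), (0 : ℝ), (0 : ℝ)) : ℝ × ℝ × ℝ))
    (hX : ContDiffOn ℝ 4 (fun p : ℝ × ℝ × ℝ => X p.1 p.2.1 p.2.2) V)
    (hY : ContDiffOn ℝ 4 (fun p : ℝ × ℝ × ℝ => Y p.1 p.2.1 p.2.2) V)
    (hode : ∀ t x y : ℝ, (t, x, y) ∈ V →
      HasDerivAt (fun s => X s x y) (f (X t x y) (Y t x y)) t ∧
      HasDerivAt (fun s => Y s x y) (g (X t x y) (Y t x y)) t)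
    (hinit : ∀ x y : ℝ, X 0 x y = x ∧ Y 0 x y = y)
    (hf0 : f 0 0 = 0)
    (hfy0 : pdy f 0 0 ≠ 0)
    (m : ℝ) (hm : 0 < m) (δ₀ : ℝ) (hδ₀ : 0 < δ₀)
    (Tt : ℝ → ℝ → ℝ)
    (hTt : ∀ x y : ℝ, |x| ≤ m * |y| ^ 3 → 0 < |y| → |y| ≤ δ₀ →
      X (Tt x y) x y = -x ∧
      |Tt x y| ≤ 4 * m / |pdy f 0 0| * y ^ 2 ∧
      ∀ t : ℝ, |t| ≤ 4 * m / |pdy f 0 0| * y ^ 2 → X t x y = -x → t = Tt x y)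
    (Pt : ℝ → ℝ → ℝ) (hPt : ∀ x y, Pt x y = Y (Tt x y) x y)
    (β : ℝ) (hβ : β = -2 * g 0 0 / pdy f 0 0)
    (Rt : ℝ → ℝ → ℝ) (hRt : ∀ x y, Rt x y = Pt x y - y - β * x / y) :
    (∀ ε > (0 : ℝ), ∃ δ > (0 : ℝ), ∀ x y : ℝ,
      0 < |y| → |y| ≤ δ → |x| ≤ m * |y| ^ 3 → |Rt x y / y ^ 2| ≤ ε) ∧
    (∀ ε > (0 : ℝ), ∃ δ > (0 : ℝ), ∀ x y : ℝ,
      0 < |y| → |y| ≤ δ → |x| ≤ m * |y| ^ 3 → |pdy Rt x y / y| ≤ ε) ∧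
    (∀ ε > (0 : ℝ), ∃ δ > (0 : ℝ), ∀ x y : ℝ,
      0 < |y| → |y| ≤ δ → |x| ≤ m * |y| ^ 3 → |pdx Rt x y * y| ≤ ε) := by
  set a := pdy f 0 0 with ha
  set K := 4 * m / |a|
  have hK : 0 ≤ K := by positivity
  have hm' : 0 ≤ m := hm.le
  have J := flowJet_of_ode hV (hX.of_le (by norm_num)) (hY.of_le (by norm_num)) hode hinit hf0 hfy0
  rw [← ha] at J
  set φ : ℝ × ℝ × ℝ → ℝ := fun p => X p.1 p.2.1 p.2.2
  set ψ : ℝ × ℝ × ℝ → ℝ := fun p => Y p.1 p.2.1 p.2.2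
  have bound {u : ℝ × ℝ × ℝ → ℝ} (hu : Tendsto u
      (𝓝 0 ⊓ 𝓟 (thinCone m K) ⊓ 𝓟 {p | φ p = -p.2.1}) (𝓝 0)) {ε : ℝ} (hε : 0 < ε) :
      ∃ δ > 0, δ < δ₀ ∧ ∀ x y : ℝ, 0 < |y| → |y| ≤ δ → |x| ≤ m * |y| ^ 3 →
        |u (Tt x y, x, y)| ≤ ε := by
    have h1 := eventually_inf_principal.1 (Metric.tendsto_nhds.1 hu ε hε)
    obtain ⟨δ, hδ, H⟩ := exists_delta_of_eventually_thinCone hm' hK h1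
    refine ⟨min δ (δ₀ / 2), by positivity, (min_le_right _ _).trans_lt (half_lt_self hδ₀),
      fun x y hy0 hy hx => ?_⟩
    obtain ⟨t1, t2, -⟩ := hTt x y hx hy0
      (hy.trans ((min_le_right _ _).trans (half_le_self hδ₀.le)))
    simpa [Real.dist_eq] using (H _ x y hy0 (hy.trans (min_le_left _ _)) hx t2 t1).le
  obtain ⟨δ₁, hδ₁, D⟩ := J.exists_hasDerivWithinAt hm' hK
  refine ⟨fun ε hε => ?_, fun ε hε => ?_, fun ε hε => ?_⟩
  · obtain ⟨δ, hδ, -, H⟩ := bound (J.tendsto_remainder hm' hK) hε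
    refine ⟨δ, hδ, fun x y hy0 hy hx => ?_⟩
    rw [hRt, hPt, hβ]
    exact H x y hy0 hy hx
  · obtain ⟨δ, hδ, hδδ₀, H⟩ := bound (J.tendsto_remainder_y hm' hK) hε
    refine ⟨min δ (δ₁ / 2), by positivity, fun x y hy0 hy hx => ?_⟩
    have hyδ : |y| ≤ δ := hy.trans (min_le_left _ _)
    have hyδ₁ : |y| < δ₁ := (hy.trans (min_le_right _ _)).trans_lt (half_lt_self hδ₁)
    have hyd : |y| < min δ₀ δ₁ := lt_min (hyδ.trans_lt hδδ₀) hyδ₁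
    have hyne : y ≠ 0 := abs_pos.1 hy0
    obtain ⟨S, hyS, hSu, hS⟩ : ∃ S : Set ℝ, y ∈ S ∧ UniqueDiffOn ℝ S ∧
        ∀ s ∈ S, |y| ≤ |s| ∧ |s| ≤ min δ₀ δ₁ := by
      rcases hyne.lt_or_gt with hneg | hpos
      · rw [abs_of_neg hneg] at hyd
        refine ⟨Icc (-min δ₀ δ₁) y, ⟨by linarith, le_rfl⟩, uniqueDiffOn_Icc (by linarith),
          fun s hs => ?_⟩
        rw [abs_of_neg hneg, abs_of_neg (hs.2.trans_lt hneg)]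
        exact ⟨by linarith [hs.2], by linarith [hs.1]⟩
      · rw [abs_of_pos hpos] at hyd
        refine ⟨Icc y (min δ₀ δ₁), ⟨le_rfl, hyd.le⟩, uniqueDiffOn_Icc hyd, fun s hs => ?_⟩
        rw [abs_of_pos hpos, abs_of_pos (hpos.trans_le hs.1)]
        exact hs
    have hd := D (fun s => Tt x s) (fun s => (x, s)) (0, 1) S y hyS hyne (fun s hs => by
      obtain ⟨hs1, hs2⟩ := hS s hs
      have hxs : |x| ≤ m * |s| ^ 3 := hx.trans (by gcongr)
      obtain ⟨t1, t2, -⟩ := hTt x s hxs (hy0.trans_le hs1) (hs2.trans (min_le_left _ _))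
      exact ⟨hs1, hs2.trans (min_le_right _ _), hxs, t2, t1⟩)
      ((hasDerivAt_const _ _).prodMk (hasDerivAt_id _)).hasDerivWithinAt
    have hR := (hd.sub (hasDerivWithinAt_id y S)).sub
      ((hasDerivWithinAt_const y S (β * x)).div (hasDerivWithinAt_id y S) hyne)
    have hRe : (fun s => Rt x s) = fun s => ψ (Tt x s, x, s) - s - β * x / s := by
      funext s; rw [hRt, hPt]
    rcases deriv_eq_zero_or_eq_of_hasDerivWithinAt (hSu y hyS) hR with h0 | h0
    · rw [pdy, hRe, show deriv (fun s => ψ (Tt x s, x, s) - s - β * x / s) y = 0 from h0]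
      simpa using hε.le
    · rw [pdy, hRe, show deriv (fun s => ψ (Tt x s, x, s) - s - β * x / s) y = _ from h0]
      convert H x y hy0 hyδ hx using 3
      simp only [hβ, id_eq, Prod.mk_zero_zero, add_zero]
      ring
  · obtain ⟨δ, hδ, hδδ₀, H⟩ := bound (J.tendsto_remainder_x.mono_left inf_le_left) hε
    refine ⟨min δ δ₁, by positivity, fun x y hy0 hy hx => ?_⟩
    have hyδ : |y| ≤ δ := hy.trans (min_le_left _ _)
    have hyδ₁ : |y| ≤ δ₁ := hy.trans (min_le_right _ _)
    have hyne : y ≠ 0 := abs_pos.1 hy0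
    have hmy : 0 < m * |y| ^ 3 := by positivity
    have hxS : x ∈ Icc (-(m * |y| ^ 3)) (m * |y| ^ 3) := abs_le.1 hx
    have hd := D (fun s => Tt s y) (fun s => (s, y)) (1, 0) _ x hxS hyne (fun s hs => by
      have hxs : |s| ≤ m * |y| ^ 3 := abs_le.2 hs
      obtain ⟨t1, t2, -⟩ := hTt s y hxs hy0 (hyδ.trans hδδ₀.le)
      exact ⟨le_rfl, hyδ₁, hxs, t2, t1⟩)
      ((hasDerivAt_id _).prodMk (hasDerivAt_const _ _)).hasDerivWithinAt
    have hR := (hd.sub (hasDerivWithinAt_const x _ y)).sub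
      (((hasDerivWithinAt_id x _).const_mul β).div_const y)
    have hRe : (fun s => Rt s y) = fun s => ψ (Tt s y, s, y) - y - β * s / y := by
      funext s; rw [hRt, hPt]
    rcases deriv_eq_zero_or_eq_of_hasDerivWithinAt
      (uniqueDiffOn_Icc (by linarith) x hxS) hR with h0 | h0
    · rw [pdx, hRe, show deriv (fun s => ψ (Tt s y, s, y) - y - β * s / y) x = 0 from h0]
      simpa using hε.le
    · rw [pdx, hRe, show deriv (fun s => ψ (Tt s y, s, y) - y - β * s / y) x = _ from h0]
      convert H x y hy0 hyδ hx using 3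
      simp only [hβ, Prod.mk_zero_zero, sub_zero, mul_one]
end
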